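/- arXiv:1607.06189 — 4 statements merged into one kernel-verified Lean document; each statement's English description precedes it below -/
import Mathlib

section
/- Let (R, m, k) be a Cohen–Macaulay local ring with an isolated singularity and let M, N be Cohen–Macaulay R-modules. Then the R-module stHom_R(M, N) has finite length. -/
/-!
Common definitions: Cohen-Macaulay modules, isolated singularities, stable Hom,
syzygies, transposes, Auslander-Reiten sequences, and the Grothendieck-type groups
`G(CM(R))`, `Ex(CM(R))`, `AR(CM(R))` from the paper
"Syzygies of Cohen-Macaulay modules and Grothendieck groups".

Throughout, the maximal ideal of a local ring is realized as the Jacobson radical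
`(⊥ : Ideal R).jacobson` (for a local ring these coincide), which lets the definitions
make sense without a `IsLocalRing` instance argument.
-/

namespace Paper

/-- A regular local ring: a Noetherian local ring whose maximal ideal (= Jacobson radical
of `⊥`) can be generated by `dim A` elements. -/
def IsRegularLocalRing (A : Type) [CommRing A] : Prop :=
  IsNoetherianRing A ∧ IsLocalRing A ∧
    ∃ s : Finset A, Ideal.span (s : Set A) = (⊥ : Ideal A).jacobson ∧
      (s.card : WithBot ℕ∞) = ringKrullDim A

/-- `M` is a (maximal) Cohen-Macaulay `R`-module: it is finitely generated, and it is either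
zero or satisfies `depth M = dim R`, the latter being expressed by the existence of a weakly
`M`-regular sequence of length `dim R` consisting of elements of the maximal ideal
(equivalently, since `depth M ≤ dim R` always holds for nonzero finitely generated `M` over a
Noetherian local ring `R`). -/
def IsMCM (R : Type) [CommRing R] (M : Type) [AddCommGroup M] [Module R M] : Prop :=
  Module.Finite R M ∧ (Subsingleton M ∨
    ∃ rs : List R, (∀ x ∈ rs, x ∈ (⊥ : Ideal R).jacobson) ∧
      RingTheory.Sequence.IsWeaklyRegular M rs ∧
      (rs.length : WithBot ℕ∞) = ringKrullDim R)

/-- The local ring `R` has an isolated singularity: `R_p` is regular local for every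
prime `p` different from the maximal ideal. -/
def IsolatedSingularity (R : Type) [CommRing R] : Prop :=
  ∀ (p : Ideal R) (_ : p.IsPrime), p ≠ (⊥ : Ideal R).jacobson →
    IsRegularLocalRing (Localization p.primeCompl)

section StableHom

variable (R : Type) [CommRing R]

/-- The submodule of `Hom_R(M,N)` consisting of homomorphisms factoring through a
finitely generated free module. -/
def stSub (M N : Type) [AddCommGroup M] [Module R M] [AddCommGroup N] [Module R N] :
    Submodule R (M →ₗ[R] N) :=
  Submodule.span R {f | ∃ (n : ℕ) (g : M →ₗ[R] (Fin n → R)) (h : (Fin n → R) →ₗ[R] N),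
    f = h ∘ₗ g}

/-- The stable Hom module `stHom_R(M,N) = Hom_R(M,N)/{maps factoring through f.g. frees}`. -/
abbrev StHom (M N : Type) [AddCommGroup M] [Module R M] [AddCommGroup N] [Module R N] :=
  (M →ₗ[R] N) ⧸ stSub R M N

/-- The map `stHom_R(M,N) → stHom_R(M,N')` induced by postcomposition with `φ : N →ₗ[R] N'`. -/
def stMapLeft {M N N' : Type} [AddCommGroup M] [Module R M] [AddCommGroup N] [Module R N]
    [AddCommGroup N'] [Module R N'] (φ : N →ₗ[R] N') : StHom R M N →ₗ[R] StHom R M N' :=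
  Submodule.mapQ _ _ (LinearMap.llcomp R M N N' φ) (by
    rw [stSub, Submodule.span_le]
    rintro f ⟨n, g, h, rfl⟩
    exact Submodule.subset_span ⟨n, g, φ ∘ₗ h, rfl⟩)

/-- The map `stHom_R(M,N) → stHom_R(M',N)` induced by precomposition with `φ : M' →ₗ[R] M`. -/
def stMapRight {M M' N : Type} [AddCommGroup M] [Module R M] [AddCommGroup M'] [Module R M']
    [AddCommGroup N] [Module R N] (φ : M' →ₗ[R] M) : StHom R M N →ₗ[R] StHom R M' N :=
  Submodule.mapQ _ _ (LinearMap.lcomp R N φ) (by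
    rw [stSub, Submodule.span_le]
    rintro f ⟨n, g, h, rfl⟩
    exact Submodule.subset_span ⟨n, g ∘ₗ φ, h, rfl⟩)

end StableHom

section Syzygies

variable (R : Type) [CommRing R]

/-- `S` is (isomorphic to) a first syzygy of `M`: the kernel of a minimal free cover
`π : R^n → M` (minimality: `ker π ⊆ m·R^n`). -/
def IsSyzygyOf (S M : Type) [AddCommGroup S] [Module R S] [AddCommGroup M] [Module R M] :
    Prop :=
  ∃ (n : ℕ) (π : (Fin n → R) →ₗ[R] M), Function.Surjective π ∧
    LinearMap.ker π ≤ (⊥ : Ideal R).jacobson • (⊤ : Submodule R (Fin n → R)) ∧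
    Nonempty (S ≃ₗ[R] LinearMap.ker π)

/-- `S` belongs to `ΩCM(R)`: it is a first syzygy of some Cohen-Macaulay module. -/
def MemOmegaCM (S : Type) [AddCommGroup S] [Module R S] : Prop :=
  ∃ N : ModuleCat.{0} R, IsMCM R N ∧ IsSyzygyOf R S N

/-- `M` has a nonzero free direct summand. -/
def HasFreeSummand (M : Type) [AddCommGroup M] [Module R M] : Prop :=
  ∃ P : ModuleCat.{0} R, Nonempty (M ≃ₗ[R] (P × R))

/-- `M'` is the non-free part of `M`: it has no nonzero free direct summand and
`M ≅ M' ⊕ R^a` for some `a ≥ 0`. -/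
def IsNonfreePart (M M' : Type) [AddCommGroup M] [Module R M] [AddCommGroup M'] [Module R M'] :
    Prop :=
  ¬ HasFreeSummand R M' ∧ ∃ a : ℕ, Nonempty (M ≃ₗ[R] (M' × (Fin a → R)))

/-- `M` is an indecomposable module: nonzero, and in any decomposition `M ≅ P × Q`
one factor vanishes. -/
def Indecomp (M : Type) [AddCommGroup M] [Module R M] : Prop :=
  ¬ Subsingleton M ∧ ∀ (P Q : ModuleCat.{0} R), Nonempty (M ≃ₗ[R] (P × Q)) →
    Subsingleton P ∨ Subsingleton Q

/-- `A` is a direct summand of `B`. -/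
def IsSummandOf (A B : Type) [AddCommGroup A] [Module R A] [AddCommGroup B] [Module R B] :
    Prop :=
  ∃ C : ModuleCat.{0} R, Nonempty (B ≃ₗ[R] (A × C))

/-- A linear map is a split epimorphism if it has a right inverse. -/
def IsSplitEpi {M N : Type} [AddCommGroup M] [Module R M] [AddCommGroup N] [Module R N]
    (g : M →ₗ[R] N) : Prop :=
  ∃ s : N →ₗ[R] M, g ∘ₗ s = LinearMap.id

/-- `0 → A → B → C → 0` (given by `f`, `g`) is an Auslander-Reiten sequence: a non-split
short exact sequence of finitely generated modules with `A`, `C` indecomposable non-free,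
such that every non-split-epi map `X → C` from a finitely generated module factors
through `g : B → C`. -/
def IsARSequence {A B C : Type} [AddCommGroup A] [Module R A] [AddCommGroup B] [Module R B]
    [AddCommGroup C] [Module R C] (f : A →ₗ[R] B) (g : B →ₗ[R] C) : Prop :=
  Module.Finite R A ∧ Module.Finite R B ∧ Module.Finite R C ∧
  Function.Injective f ∧ Function.Surjective g ∧ Function.Exact f g ∧
  ¬ IsSplitEpi R g ∧
  Indecomp R A ∧ ¬ Module.Free R A ∧ Indecomp R C ∧ ¬ Module.Free R C ∧
  ∀ (X : ModuleCat.{0} R) (h : (X : Type) →ₗ[R] C), Module.Finite R X → ¬ IsSplitEpi R h →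
    ∃ l : (X : Type) →ₗ[R] B, g ∘ₗ l = h

/-- `R` is of finite CM type: finitely many isomorphism classes of indecomposable
Cohen-Macaulay modules. -/
def FiniteCMType : Prop :=
  ∃ L : List (ModuleCat.{0} R), ∀ U : ModuleCat.{0} R, IsMCM R U → Indecomp R U →
    ∃ V ∈ L, Nonempty ((U : Type) ≃ₗ[R] (V : Type))

/-- `R` is of finite ΩCM type: finitely many isomorphism classes of indecomposable
modules in `ΩCM(R)`. -/
def FiniteOmegaCMType : Prop :=
  ∃ L : List (ModuleCat.{0} R), ∀ U : ModuleCat.{0} R, Module.Finite R U → Indecomp R U →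
    MemOmegaCM R U → ∃ V ∈ L, Nonempty ((U : Type) ≃ₗ[R] (V : Type))

/-- There are only finitely many isomorphism classes of indecomposable direct summands of
first syzygies of Cohen-Macaulay `R`-modules. -/
def FiniteSyzygySummandType : Prop :=
  ∃ L : List (ModuleCat.{0} R), ∀ U : ModuleCat.{0} R, Module.Finite R U → Indecomp R U →
    (∃ S : ModuleCat.{0} R, MemOmegaCM R S ∧ IsSummandOf R (U : Type) S) →
    ∃ V ∈ L, Nonempty ((U : Type) ≃ₗ[R] (V : Type))

end Syzygies

section Grothendieck

variable (R : Type) [CommRing R]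

/-- The Cohen-Macaulay `R`-modules, as objects of `ModuleCat R`. -/
def CMMod := {M : ModuleCat.{0} R // IsMCM R M}

/-- The relations `[X] + [Z] - [Y]` with `Y ≅ X ⊕ Z`, defining `G(CM(R))` as a quotient
of the free abelian group on the Cohen-Macaulay modules. -/
def GRel : AddSubgroup (FreeAbelianGroup (CMMod R)) :=
  AddSubgroup.closure {a | ∃ X Z Y : CMMod R,
    Nonempty ((Y.1 : Type) ≃ₗ[R] ((X.1 : Type) × (Z.1 : Type))) ∧
    a = FreeAbelianGroup.of X + FreeAbelianGroup.of Z - FreeAbelianGroup.of Y}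

/-- The group `G(CM(R))`: the free abelian group on the isomorphism classes of
Cohen-Macaulay `R`-modules (realized as the free abelian group on all Cohen-Macaulay
modules modulo the direct sum relations). -/
abbrev GCM := FreeAbelianGroup (CMMod R) ⧸ GRel R

/-- The class of an element of the free abelian group in `G(CM(R))`. -/
def gcls : FreeAbelianGroup (CMMod R) →+ GCM R := QuotientAddGroup.mk' _

/-- The subgroup `Ex(CM(R))` of `G(CM(R))` generated by `[X]+[Z]-[Y]` coming from short
exact sequences `0 → Z → Y → X → 0` of Cohen-Macaulay modules. -/
def ExCM : AddSubgroup (GCM R) :=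
  AddSubgroup.closure {x | ∃ (X Z Y : CMMod R) (f : (Z.1 : Type) →ₗ[R] (Y.1 : Type))
    (g : (Y.1 : Type) →ₗ[R] (X.1 : Type)), Function.Injective f ∧ Function.Surjective g ∧
    Function.Exact f g ∧
    x = gcls R (FreeAbelianGroup.of X + FreeAbelianGroup.of Z - FreeAbelianGroup.of Y)}

/-- The subgroup `AR(CM(R))` of `G(CM(R))` generated by `[X]+[Z]-[Y]` coming from
Auslander-Reiten sequences `0 → Z → Y → X → 0` of Cohen-Macaulay modules. -/
def ARCM : AddSubgroup (GCM R) :=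
  AddSubgroup.closure {x | ∃ (X Z Y : CMMod R) (f : (Z.1 : Type) →ₗ[R] (Y.1 : Type))
    (g : (Y.1 : Type) →ₗ[R] (X.1 : Type)), IsARSequence R f g ∧
    x = gcls R (FreeAbelianGroup.of X + FreeAbelianGroup.of Z - FreeAbelianGroup.of Y)}

/-- The image of a subgroup `H ≤ G(CM(R))` in `G(CM(R)) ⊗_ℤ ℚ`: the `ℚ`-subspace spanned by
the image of `H`. The equality `ratSpan R (ExCM R) = ratSpan R (ARCM R)` expresses
`Ex(CM(R)) ⊗_ℤ ℚ = AR(CM(R)) ⊗_ℤ ℚ` inside `G(CM(R)) ⊗_ℤ ℚ`. -/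
def ratSpan (H : AddSubgroup (GCM R)) : Submodule ℚ (TensorProduct ℤ ℚ (GCM R)) :=
  Submodule.span ℚ {x | ∃ g ∈ H, x = (1 : ℚ) ⊗ₜ[ℤ] g}

end Grothendieck

section Transpose

variable (R : Type) [CommRing R]

/-- The data of a minimal free presentation `R^{n1} --d--> R^{n0} --p--> M → 0`. -/
structure PresData (M : Type) [AddCommGroup M] [Module R M] where
  n1 : ℕ
  n0 : ℕ
  d : (Fin n1 → R) →ₗ[R] (Fin n0 → R)
  p : (Fin n0 → R) →ₗ[R] M
  surj : Function.Surjective p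
  exact : LinearMap.range d = LinearMap.ker p
  min0 : LinearMap.ker p ≤ (⊥ : Ideal R).jacobson • (⊤ : Submodule R (Fin n0 → R))
  min1 : LinearMap.ker d ≤ (⊥ : Ideal R).jacobson • (⊤ : Submodule R (Fin n1 → R))

/-- The (Auslander) transpose determined by a minimal free presentation: the cokernel of
the dual map `(R^{n0})^* → (R^{n1})^*`. -/
abbrev TrOf {M : Type} [AddCommGroup M] [Module R M] (D : PresData R M) : Type :=
  Module.Dual R (Fin D.n1 → R) ⧸ LinearMap.range D.d.dualMap

/-- The data of a minimal free cover `p : R^n → M`. -/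
structure SyzData (M : Type) [AddCommGroup M] [Module R M] where
  n : ℕ
  p : (Fin n → R) →ₗ[R] M
  surj : Function.Surjective p
  min : LinearMap.ker p ≤ (⊥ : Ideal R).jacobson • (⊤ : Submodule R (Fin n → R))

/-- The first syzygy determined by a minimal free cover. -/
abbrev SyzOf {M : Type} [AddCommGroup M] [Module R M] (D : SyzData R M) : Type :=
  LinearMap.ker D.p

/-- The data needed to construct `Ω⁻¹ M = Tr Ω Tr M`. -/
structure CosyzData (M : Type) [AddCommGroup M] [Module R M] where
  P : PresData R M
  S : SyzData R (TrOf R P)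
  Q : PresData R (SyzOf R S)

/-- The cosyzygy `Ω⁻¹ M = Tr Ω Tr M` determined by the data `D`. -/
abbrev CosyzOf {M : Type} [AddCommGroup M] [Module R M] (D : CosyzData R M) : Type :=
  TrOf R D.Q

/-- The map `t : Tr M → Tr M'` represents the transpose `Tr φ` of `φ : M' → M`
(with respect to the chosen minimal presentations). -/
def RepresentsTr {M M' : Type} [AddCommGroup M] [Module R M] [AddCommGroup M'] [Module R M']
    (D : PresData R M) (D' : PresData R M') (φ : M' →ₗ[R] M)
    (t : TrOf R D →ₗ[R] TrOf R D') : Prop :=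
  ∃ (φ0 : (Fin D'.n0 → R) →ₗ[R] (Fin D.n0 → R)) (φ1 : (Fin D'.n1 → R) →ₗ[R] (Fin D.n1 → R)),
    D.p ∘ₗ φ0 = φ ∘ₗ D'.p ∧ D.d ∘ₗ φ1 = φ0 ∘ₗ D'.d ∧
    t ∘ₗ (LinearMap.range D.d.dualMap).mkQ = (LinearMap.range D'.d.dualMap).mkQ ∘ₗ φ1.dualMap

/-- The map `v : Ω Y → Ω Y'` represents the syzygy `Ω ψ` of `ψ : Y → Y'`
(with respect to the chosen minimal covers). -/
def RepresentsOmega {Y Y' : Type} [AddCommGroup Y] [Module R Y] [AddCommGroup Y'] [Module R Y']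
    (D : SyzData R Y) (D' : SyzData R Y') (ψ : Y →ₗ[R] Y')
    (v : SyzOf R D →ₗ[R] SyzOf R D') : Prop :=
  ∃ h : (Fin D.n → R) →ₗ[R] (Fin D'.n → R), D'.p ∘ₗ h = ψ ∘ₗ D.p ∧
    (LinearMap.ker D'.p).subtype ∘ₗ v = h ∘ₗ (LinearMap.ker D.p).subtype

/-- The map `w : Ω⁻¹ X' → Ω⁻¹ X` represents `Ω⁻¹ φ = Tr Ω Tr φ` for `φ : X' → X`. -/
def RepresentsOmegaInv {X X' : Type} [AddCommGroup X] [Module R X] [AddCommGroup X']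
    [Module R X'] (C : CosyzData R X) (C' : CosyzData R X') (φ : X' →ₗ[R] X)
    (w : CosyzOf R C' →ₗ[R] CosyzOf R C) : Prop :=
  ∃ (t : TrOf R C.P →ₗ[R] TrOf R C'.P) (v : SyzOf R C.S →ₗ[R] SyzOf R C'.S),
    RepresentsTr R C.P C'.P φ t ∧ RepresentsOmega R C.S C'.S t v ∧
    RepresentsTr R C'.Q C.Q v w

end Transpose

/-- `M` has injective dimension at most `n` as an `R`-module. -/
def InjDimLE (R : Type) [CommRing R] : ℕ → ModuleCat.{0} R → Prop
  | 0, M => Module.Injective R M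
  | n+1, M => ∃ (I : ModuleCat.{0} R) (f : (M : Type) →ₗ[R] (I : Type)),
      Module.Injective R I ∧ Function.Injective f ∧
      InjDimLE R n (ModuleCat.of R ((I : Type) ⧸ LinearMap.range f))

/-- A Gorenstein local ring: a Noetherian local ring of finite injective dimension as a
module over itself. -/
def IsGorensteinLocal (R : Type) [CommRing R] : Prop :=
  IsNoetherianRing R ∧ IsLocalRing R ∧ ∃ n : ℕ, InjDimLE R n (ModuleCat.of R R)

/-- The length of an `R`-module, expressed as the Krull dimension of its lattice of
submodules. -/
noncomputable def modLength (R M : Type) [CommRing R] [AddCommGroup M] [Module R M] :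
    WithBot ℕ∞ :=
  Order.krullDim (Submodule R M)

/-!
By a theorem of Rees, the depth of a module is detected by `Ext`, so it drops by at most one
modulo any regular element. Killing an element of the maximal ideal that is regular on `M` pushes
every associated prime of `M` to a strictly larger associated prime of the quotient, so `dim R/q ≥
depth M` for `q ∈ Ass M`; by prime avoidance a prime `p ≠ m` then contains a regular sequence on
`M` of length `depth M - dim R/p`. If `M` is maximal Cohen-Macaulay this length is at least
`height p`, so `M_p` has depth at least `dim R_p`, and over the regular ring `R_p` the generators
of the maximal ideal can be divided out one at a time until only a vector space is left: `M_p` is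
free. The identity of `M_p` then factors through a free module, and clearing denominators exhibits
an element outside `p` annihilating `stHom(M, N)`.
-/

open RingTheory.Sequence IsLocalRing
open scoped Pointwise

universe u v

section Depth

variable {R : Type u} [CommRing R] {M : Type v} [AddCommGroup M] [Module R M]

/-- The `I`-depth (grade) of `M` is at least `n`. Asking for a weakly regular sequence makes the
`I`-depth infinite when `M` is finite and `I • M = M`, in particular when `M = 0`. -/
def DepthGE (I : Ideal R) (M : Type v) [AddCommGroup M] [Module R M] (n : ℕ) : Prop :=
  ∃ rs : List R, rs.length = n ∧ (∀ r ∈ rs, r ∈ I) ∧ IsWeaklyRegular M rs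

theorem depthGE_zero (I : Ideal R) : DepthGE I M 0 :=
  ⟨[], rfl, by simp, .nil R M⟩

theorem depthGE_succ_iff {I : Ideal R} {n : ℕ} :
    DepthGE I M (n + 1) ↔ ∃ x ∈ I, IsSMulRegular M x ∧ DepthGE I (QuotSMulTop x M) n := by
  constructor
  · rintro ⟨_ | ⟨x, rs⟩, hlen, hmem, hreg⟩
    · simp at hlen
    · obtain ⟨hx, hrs⟩ := (isWeaklyRegular_cons_iff M x rs).mp hreg
      obtain ⟨hxI, hrsI⟩ := List.forall_mem_cons.mp hmem
      exact ⟨x, hxI, hx, rs, Nat.succ.inj hlen, hrsI, hrs⟩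
  · rintro ⟨x, hxI, hx, rs, rfl, hrsI, hrs⟩
    exact ⟨x :: rs, rfl, List.forall_mem_cons.mpr ⟨hxI, hrsI⟩, hrs.cons hx⟩

theorem isWeaklyRegular_replicate_of_smul_eq_self {r : R} (hr : ∀ m : M, r • m = m) (n : ℕ) :
    IsWeaklyRegular M (List.replicate n r) := by
  induction n generalizing M with
  | zero => exact .nil R M
  | succ n ih =>
    refine (isWeaklyRegular_cons_iff M r _).mpr ⟨fun a b hab ↦ ?_, ih fun m ↦ ?_⟩
    · simpa only [hr] using hab
    · obtain ⟨m, rfl⟩ := Submodule.Quotient.mk_surjective _ m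
      rw [← Submodule.Quotient.mk_smul, hr]

theorem depthGE_of_smul_top_eq_top [Module.Finite R M] {I : Ideal R}
    (hI : I • (⊤ : Submodule R M) = ⊤) (n : ℕ) : DepthGE I M n := by
  obtain ⟨r, hrI, hr⟩ :=
    Submodule.exists_mem_and_smul_eq_self_of_fg_of_le_smul I ⊤ Module.Finite.fg_top hI.ge
  refine ⟨List.replicate n r, List.length_replicate, fun x hx ↦ ?_,
    isWeaklyRegular_replicate_of_smul_eq_self (fun m ↦ hr m trivial) n⟩
  rwa [List.eq_of_mem_replicate hx]

theorem DepthGE.map_algebraMap {S : Type*} [CommRing S] [Algebra R S] [Module S M]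
    [IsScalarTower R S M] {I : Ideal R} {n : ℕ} (h : DepthGE I M n) :
    DepthGE (I.map (algebraMap R S)) M n := by
  obtain ⟨rs, hlen, hmem, hreg⟩ := h
  exact ⟨rs.map (algebraMap R S), by rwa [List.length_map],
    List.forall_mem_map.mpr fun r hr ↦ Ideal.mem_map_of_mem _ (hmem r hr),
    (isWeaklyRegular_map_algebraMap_iff S M rs).mpr hreg⟩

theorem DepthGE.localizedModule {I : Ideal R} {n : ℕ} (h : DepthGE I M n) (S : Submonoid R) :
    DepthGE (I.map (algebraMap R (Localization S))) (LocalizedModule S M) n := by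
  obtain ⟨rs, hlen, hmem, hreg⟩ := h
  exact ⟨rs.map (algebraMap R (Localization S)), by rwa [List.length_map],
    List.forall_mem_map.mpr fun r hr ↦ Ideal.mem_map_of_mem _ (hmem r hr),
    hreg.of_isLocalizedModule (Localization S) S (LocalizedModule.mkLinearMap S M)⟩

open CategoryTheory Abelian Limits in
theorem subsingleton_ext_quotSMulTop [Small.{v} R] {N : ModuleCat.{v} R} {x : R}
    (hx : IsSMulRegular M x) {i : ℕ}
    (hi : Subsingleton (Ext N (ModuleCat.of R M) i))
    (hi' : Subsingleton (Ext N (ModuleCat.of R M) (i + 1))) :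
    Subsingleton (Ext N (ModuleCat.of R (QuotSMulTop x M)) i) := by
  have hx' : IsSMulRegular (ModuleCat.of R M) x := hx
  have hzero := AddCommGrpCat.isZero_of_iff_subsingleton.mpr hi
  have hzero' := AddCommGrpCat.isZero_of_iff_subsingleton.mpr hi'
  exact AddCommGrpCat.subsingleton_of_isZero <| ShortComplex.Exact.isZero_of_both_zeros
    (Ext.covariant_sequence_exact₃' N hx'.smulShortComplex_shortExact i (i + 1) rfl)
    (hzero.eq_zero_of_src _) (hzero'.eq_zero_of_tgt _)

variable [IsNoetherianRing R] [Module.Finite R M]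

open CategoryTheory Abelian in
theorem depthGE_iff_subsingleton_ext [Small.{v} R] {I : Ideal R}
    (hI : I • (⊤ : Submodule R M) < ⊤) (n : ℕ) :
    DepthGE I M n ↔ ∀ i < n,
      Subsingleton (Ext (ModuleCat.of R (Shrink.{v} (R ⧸ I))) (ModuleCat.of R M) i) := by
  refine Iff.trans ?_ ((ModuleCat.exists_isRegular_tfae I n (ModuleCat.of R M) hI).out 3 1)
  constructor
  · rintro ⟨rs, hlen, hmem, hreg⟩
    have hrs : Ideal.ofList rs ≤ I := Ideal.span_le.mpr hmem
    exact ⟨rs, hlen, hmem, hreg, (lt_of_le_of_lt (Submodule.smul_mono_left hrs) hI).ne'⟩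
  · rintro ⟨rs, hlen, hmem, hreg⟩
    exact ⟨rs, hlen, hmem, hreg.toIsWeaklyRegular⟩

theorem DepthGE.quotSMulTop [Small.{v} R] {I : Ideal R} {n : ℕ} (h : DepthGE I M (n + 1))
    {x : R} (hx : IsSMulRegular M x) : DepthGE I (QuotSMulTop x M) n := by
  by_cases hIx : I • (⊤ : Submodule R (QuotSMulTop x M)) = ⊤
  · exact depthGE_of_smul_top_eq_top hIx n
  have hI : I • (⊤ : Submodule R M) ≠ ⊤ := fun hI ↦ hIx <| by
    have hmap := congrArg (Submodule.map (x • (⊤ : Submodule R M)).mkQ) hI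
    rwa [Submodule.map_smul'', Submodule.map_top, Submodule.range_mkQ] at hmap
  rw [depthGE_iff_subsingleton_ext hI.lt_top] at h
  rw [depthGE_iff_subsingleton_ext (lt_top_iff_ne_top.mpr hIx)]
  exact fun i hi ↦ subsingleton_ext_quotSMulTop hx (h i (by omega)) (h (i + 1) (by omega))

end Depth

section AssociatedPrimes

variable {R : Type u} [CommRing R] [IsNoetherianRing R] {M : Type v} [AddCommGroup M] [Module R M]

theorem torsionBySet_ne_bot_of_mem_associatedPrimes {q : Ideal R}
    (hq : q ∈ associatedPrimes R M) : Submodule.torsionBySet R M q ≠ ⊥ := by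
  obtain ⟨hprime, m, rfl⟩ := isAssociatedPrime_iff.mp hq
  intro hbot
  obtain rfl : m = 0 := by
    rw [← Submodule.mem_bot R, ← hbot, Submodule.mem_torsionBySet_iff]
    exact fun r ↦ Submodule.mem_colon_singleton.mp r.2
  refine hprime.ne_top ((Ideal.eq_top_iff_one _).mpr ?_)
  rw [Submodule.mem_colon_singleton, smul_zero]
  exact zero_mem _

variable [Module.Finite R M]

theorem exists_mem_torsionBySet_notMem_smul_top {x : R} (hxJ : x ∈ (⊥ : Ideal R).jacobson)
    (hx : IsSMulRegular M x) {I : Ideal R} (hI : Submodule.torsionBySet R M I ≠ ⊥) :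
    ∃ z ∈ Submodule.torsionBySet R M I, z ∉ x • (⊤ : Submodule R M) := by
  by_contra! hle
  refine hI <| Submodule.eq_bot_of_le_smul_of_le_jacobson_bot (Ideal.span {x}) _
    (IsNoetherian.noetherian _) (fun z hz ↦ ?_) ((Ideal.span_singleton_le_iff_mem _).mpr hxJ)
  obtain ⟨w, -, rfl⟩ := hle z hz
  refine Submodule.smul_mem_smul (Ideal.mem_span_singleton_self x) ?_
  rw [Submodule.mem_torsionBySet_iff] at hz ⊢
  exact fun a ↦ hx.right_eq_zero_of_smul ((smul_comm x (a : R) w).trans (hz a))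

theorem exists_lt_mem_associatedPrimes_quotSMulTop {x : R} (hxJ : x ∈ (⊥ : Ideal R).jacobson)
    (hx : IsSMulRegular M x) {q : Ideal R} (hq : q ∈ associatedPrimes R M) :
    ∃ p ∈ associatedPrimes R (QuotSMulTop x M), q < p := by
  have hxq : x ∉ q := fun hxq ↦ by
    have hmem := Set.mem_biUnion hq hxq
    rw [biUnion_associatedPrimes_eq_compl_regular R M] at hmem
    exact hmem hx
  obtain ⟨z, hz, hzx⟩ := exists_mem_torsionBySet_notMem_smul_top hxJ hx
    (torsionBySet_ne_bot_of_mem_associatedPrimes hq)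
  have hz0 : (Submodule.Quotient.mk z : QuotSMulTop x M) ≠ 0 := by
    rwa [Ne, Submodule.Quotient.mk_eq_zero]
  obtain ⟨p, hp, hle⟩ := exists_le_isAssociatedPrime_of_isNoetherianRing R _ hz0
  have hqp : q ≤ p := fun r hr ↦ hle (by
    have hrz : r • z = 0 := (Submodule.mem_torsionBySet_iff _ _).mp hz ⟨r, hr⟩
    rw [Submodule.mem_colon_singleton, ← Submodule.Quotient.mk_smul, hrz]
    exact zero_mem _)
  have hxp : x ∈ p := hle (by
    rw [Submodule.mem_colon_singleton, ← Submodule.Quotient.mk_smul, Submodule.mem_bot,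
      Submodule.Quotient.mk_eq_zero]
    exact Submodule.smul_mem_pointwise_smul _ _ _ trivial)
  exact ⟨p, hp, hqp.lt_of_not_ge fun hpq ↦ hxq (hpq hxp)⟩

theorem DepthGE.le_coheight {I : Ideal R} (hI : I ≤ (⊥ : Ideal R).jacobson) {n : ℕ}
    (h : DepthGE I M n) (q : PrimeSpectrum R) (hq : q.asIdeal ∈ associatedPrimes R M) :
    n ≤ Order.coheight q := by
  induction n generalizing M q with
  | zero => exact zero_le
  | succ n ih =>
    obtain ⟨x, hxI, hx, hquot⟩ := depthGE_succ_iff.mp h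
    obtain ⟨p, hp, hqp⟩ := exists_lt_mem_associatedPrimes_quotSMulTop (hI hxI) hx hq
    let P : PrimeSpectrum R := ⟨p, hp.isPrime⟩
    calc ((n + 1 : ℕ) : ℕ∞) = n + 1 := Nat.cast_succ n
      _ ≤ Order.coheight P + 1 := by gcongr; exact ih hquot P hp
      _ ≤ Order.coheight q := Order.coheight_add_one_le hqp

theorem exists_mem_isSMulRegular {I : Ideal R} (hI : ∀ q ∈ associatedPrimes R M, ¬ I ≤ q) :
    ∃ x ∈ I, IsSMulRegular M x := by
  by_contra! hzero
  have hsub : (I : Set R) ⊆ ⋃ q ∈ associatedPrimes R M, q := by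
    rw [biUnion_associatedPrimes_eq_compl_regular R M]
    exact hzero
  obtain ⟨q, hq, hIq⟩ := (Ideal.subset_union_prime_finite (associatedPrimes.finite R M) ⊤ ⊤
    fun q hq _ _ ↦ IsAssociatedPrime.isPrime hq).mp hsub
  exact hI q hq hIq

theorem DepthGE.of_coheight_le [Small.{v} R] {I : Ideal R} (hI : I ≤ (⊥ : Ideal R).jacobson)
    {n c : ℕ} (h : DepthGE I M (n + c)) (p : PrimeSpectrum R) (hp : Order.coheight p ≤ c) :
    DepthGE p.asIdeal M n := by
  induction n generalizing M with
  | zero => exact depthGE_zero _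
  | succ n ih =>
    obtain ⟨x, hxp, hx⟩ := exists_mem_isSMulRegular (M := M) (I := p.asIdeal) fun q hq hpq ↦ by
      have hle : ((n + 1 + c : ℕ) : ℕ∞) ≤ c := calc
        _ ≤ Order.coheight (⟨q, hq.isPrime⟩ : PrimeSpectrum R) := h.le_coheight hI _ hq
        _ ≤ Order.coheight p := Order.coheight_anti hpq
        _ ≤ c := hp
      have : n + 1 + c ≤ c := by exact_mod_cast hle
      omega
    rw [add_right_comm] at h
    exact depthGE_succ_iff.mpr ⟨x, hxp, hx, ih (h.quotSMulTop hx)⟩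

end AssociatedPrimes

section RegularLocalRing

theorem ringKrullDim_le_length_of_ofList_eq_maximalIdeal {A : Type*} [CommRing A]
    [IsNoetherianRing A] [IsLocalRing A] {l : List A} (hl : Ideal.ofList l = maximalIdeal A) :
    ringKrullDim A ≤ l.length := by
  classical
  have hcard : {a | a ∈ l}.ncard ≤ l.length := by
    rw [← List.coe_toFinset, Set.ncard_coe_finset]
    exact l.toFinset_card_le
  calc ringKrullDim A ≤ (maximalIdeal A).spanFinrank := ringKrullDim_le_spanFinrank_maximalIdeal A
    _ ≤ l.length := by
      rw [← hl]
      exact_mod_cast (Submodule.spanFinrank_span_le_ncard_of_finite l.finite_toSet).trans hcard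

variable {A : Type u} [CommRing A] [IsLocalRing A]

theorem ofList_map_mk_eq_maximalIdeal {x : A} {l : List A}
    (hl : Ideal.ofList (x :: l) = maximalIdeal A) {I : Ideal A} [IsLocalRing (A ⧸ I)]
    (hx : x ∈ I) : Ideal.ofList (l.map (Ideal.Quotient.mk I)) = maximalIdeal (A ⧸ I) := by
  rw [← map_maximalIdeal_of_surjective _ Ideal.Quotient.mk_surjective, ← hl, Ideal.map_ofList,
    List.map_cons, Ideal.ofList_cons, Ideal.Quotient.eq_zero_iff_mem.mpr hx,
    Ideal.span_singleton_zero, bot_sup_eq]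

theorem isLocalRing_quotient {I : Ideal A} (hI : I ≠ ⊤) : IsLocalRing (A ⧸ I) :=
  have : Nontrivial (A ⧸ I) := Ideal.Quotient.nontrivial_iff.mpr hI
  .of_surjective' _ Ideal.Quotient.mk_surjective

variable [IsNoetherianRing A]

theorem coheight_le_length_of_ofList_cons_eq_maximalIdeal {x : A} {l : List A}
    (hl : Ideal.ofList (x :: l) = maximalIdeal A) {q : PrimeSpectrum A} (hx : x ∈ q.asIdeal) :
    Order.coheight q ≤ l.length := by
  have := isLocalRing_quotient q.2.ne_top
  have hdim : (Order.coheight q : WithBot ℕ∞) = ringKrullDim (A ⧸ q.asIdeal) := by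
    rw [ringKrullDim_quotient, Order.coheight_eq_krullDim_Ici]
    rfl
  have hle := ringKrullDim_le_length_of_ofList_eq_maximalIdeal (ofList_map_mk_eq_maximalIdeal hl hx)
  rw [← hdim, List.length_map] at hle
  exact_mod_cast hle

variable {M : Type v} [AddCommGroup M] [Module A M] [Module.Finite A M]

theorem DepthGE.isSMulRegular_of_ofList_cons_eq_maximalIdeal {x : A} {l : List A}
    (hl : Ideal.ofList (x :: l) = maximalIdeal A)
    (h : DepthGE (maximalIdeal A) M (l.length + 1)) : IsSMulRegular M x := by
  by_contra hx
  have hmem : x ∈ ⋃ q ∈ associatedPrimes A M, (q : Set A) := by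
    rwa [biUnion_associatedPrimes_eq_compl_regular A M]
  obtain ⟨q, hq, hxq⟩ := Set.mem_iUnion₂.mp hmem
  have hle : ((l.length + 1 : ℕ) : ℕ∞) ≤ l.length :=
    (h.le_coheight (maximalIdeal_le_jacobson _) ⟨q, hq.isPrime⟩ hq).trans
      (coheight_le_length_of_ofList_cons_eq_maximalIdeal hl hxq)
  exact Nat.not_succ_le_self _ (by exact_mod_cast hle)

theorem free_of_ofList_eq_maximalIdeal_of_depthGE [Small.{v} A] {l : List A}
    (hl : Ideal.ofList l = maximalIdeal A) (h : DepthGE (maximalIdeal A) M l.length) :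
    Module.Free A M := by
  induction hn : l.length generalizing A M l with
  | zero =>
    obtain rfl := List.length_eq_zero_iff.mp hn
    have hA : IsField A := isField_iff_maximalIdeal_eq.mpr (by rw [← hl, Ideal.ofList_nil])
    let := hA.toField
    exact Module.Free.of_divisionRing A M
  | succ n ih =>
    obtain ⟨x, l, rfl⟩ := List.exists_cons_of_length_eq_add_one hn
    have hx : IsSMulRegular M x := h.isSMulRegular_of_ofList_cons_eq_maximalIdeal hl
    have hxm : x ∈ maximalIdeal A := hl ▸ Ideal.subset_span List.mem_cons_self
    let B := A ⧸ Ideal.span {x}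
    have : IsLocalRing B := isLocalRing_quotient <|
      mt Ideal.span_singleton_eq_top.mp hxm
    have hlB : Ideal.ofList (l.map (Ideal.Quotient.mk _)) = maximalIdeal B :=
      ofList_map_mk_eq_maximalIdeal hl (Ideal.mem_span_singleton_self x)
    have hdepth : DepthGE (maximalIdeal B) (QuotSMulTop x M) l.length := by
      rw [← map_maximalIdeal_of_surjective (algebraMap A B) Ideal.Quotient.mk_surjective]
      exact (h.quotSMulTop hx).map_algebraMap
    have : Module.Finite B (QuotSMulTop x M) := .of_restrictScalars_finite A B _
    have : Module.FinitePresentation A M := Module.finitePresentation_of_finite A M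
    have : Small.{v} B := small_of_surjective Ideal.Quotient.mk_surjective
    rw [← Module.free_quotSMulTop_iff_free A M (maximalIdeal_le_jacobson _ hxm) hx]
    exact ih hlB (by rwa [List.length_map]) (by simpa using hn)

end RegularLocalRing

section MaximalCohenMacaulay

theorem height_add_coheight_le_ringKrullDim {R : Type*} [CommRing R] (p : PrimeSpectrum R) :
    ((Order.height p + Order.coheight p : ℕ∞) : WithBot ℕ∞) ≤ ringKrullDim R := by
  have : Nonempty (PrimeSpectrum R) := ⟨p⟩
  rw [ringKrullDim, Order.krullDim_eq_iSup_height_add_coheight_of_nonempty]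
  exact WithBot.coe_le_coe.mpr (le_iSup (fun q ↦ Order.height q + Order.coheight q) p)

theorem IsRegularLocalRing.free_of_depthGE {A M : Type} [CommRing A] [IsLocalRing A]
    [AddCommGroup M] [Module A M] [Module.Finite A M] (hA : IsRegularLocalRing A) {n : ℕ}
    (hn : n = ringKrullDim A) (h : DepthGE (maximalIdeal A) M n) : Module.Free A M := by
  obtain ⟨_, -, s, hspan, hcard⟩ := hA
  obtain rfl : s.card = n := by exact_mod_cast hcard.trans hn.symm
  refine free_of_ofList_eq_maximalIdeal_of_depthGE (l := s.toList) ?_ (by rwa [s.length_toList])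
  rw [← jacobson_eq_maximalIdeal ⊥ bot_ne_top, ← hspan]
  simp only [Ideal.ofList, Finset.mem_toList, Finset.setOfPred_mem]

variable {R M : Type} [CommRing R] [IsLocalRing R] [AddCommGroup M] [Module R M]

theorem IsMCM.depthGE (hM : IsMCM R M) {d : ℕ} (hd : d = ringKrullDim R) :
    DepthGE (maximalIdeal R) M d := by
  obtain ⟨_, _ | ⟨rs, hmem, hreg, hlen⟩⟩ := hM
  · exact depthGE_of_smul_top_eq_top (Subsingleton.elim _ _) d
  · rw [jacobson_eq_maximalIdeal ⊥ bot_ne_top] at hmem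
    exact ⟨rs, by exact_mod_cast hlen.trans hd.symm, hmem, hreg⟩

variable [IsNoetherianRing R]

theorem IsMCM.depthGE_localizedModule (hM : IsMCM R M) (p : PrimeSpectrum R) {n : ℕ}
    (hn : n = ringKrullDim (Localization.AtPrime p.asIdeal)) :
    DepthGE (maximalIdeal (Localization.AtPrime p.asIdeal))
      (LocalizedModule p.asIdeal.primeCompl M) n := by
  have := hM.1
  obtain ⟨d, hd⟩ : ∃ d : ℕ, d = ringKrullDim R :=
    ⟨_, Order.krullDim_eq_length_of_finiteDimensionalOrder.symm⟩
  have hheight : (n : ℕ∞) = Order.height p := by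
    rw [IsLocalization.AtPrime.ringKrullDim_eq_height p.asIdeal,
      PrimeSpectrum.height_eq_orderHeight] at hn
    exact_mod_cast hn
  have hle : n + Order.coheight p ≤ d := by
    have := height_add_coheight_le_ringKrullDim p
    rw [← hheight, ← hd] at this
    exact_mod_cast this
  obtain ⟨c, rfl⟩ : ∃ c, d = n + c := Nat.exists_eq_add_of_le <| by
    exact_mod_cast le_self_add.trans hle
  have hc : Order.coheight p ≤ c := by
    rwa [Nat.cast_add, ENat.add_le_add_iff_left (ENat.natCast_ne_top n)] at hle
  rw [← Localization.AtPrime.map_eq_maximalIdeal]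
  exact ((hM.depthGE hd).of_coheight_le (maximalIdeal_le_jacobson _) p hc).localizedModule _

theorem IsolatedSingularity.free_localizedModule (hR : IsolatedSingularity R) (hM : IsMCM R M)
    (p : PrimeSpectrum R) (hp : p.asIdeal ≠ maximalIdeal R) :
    Module.Free (Localization.AtPrime p.asIdeal) (LocalizedModule p.asIdeal.primeCompl M) := by
  have := hM.1
  have hreg : IsRegularLocalRing (Localization.AtPrime p.asIdeal) :=
    hR p.asIdeal p.2 (by rwa [jacobson_eq_maximalIdeal ⊥ bot_ne_top])
  obtain ⟨-, -, s, -, hcard⟩ := id hreg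
  exact hreg.free_of_depthGE hcard (hM.depthGE_localizedModule p hcard)

end MaximalCohenMacaulay

section StableHom

theorem exists_comp_eq_smul_id_of_free_localizedModule {R M : Type*} [CommRing R] [AddCommGroup M]
    [Module R M] [Module.FinitePresentation R M] (S : Submonoid R) [Nontrivial (Localization S)]
    [Module.Free (Localization S) (LocalizedModule S M)] :
    ∃ s ∈ S, ∃ (n : ℕ) (g : M →ₗ[R] (Fin n → R)) (h : (Fin n → R) →ₗ[R] M),
      h ∘ₗ g = s • LinearMap.id := by
  let A := Localization S
  let n := Module.finrank A (LocalizedModule S M)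
  let e : LocalizedModule S M ≃ₗ[R] (Fin n → A) :=
    (Module.finBasis A (LocalizedModule S M)).equivFun.restrictScalars R
  let ι : M →ₗ[R] LocalizedModule S M := LocalizedModule.mkLinearMap S M
  let κ : (Fin n → R) →ₗ[R] (Fin n → A) :=
    LinearMap.pi fun i ↦ Algebra.linearMap R A ∘ₗ LinearMap.proj i
  have : IsLocalizedModule S κ := inferInstance
  obtain ⟨g, s, hg⟩ :=
    Module.FinitePresentation.exists_lift_of_isLocalizedModule S κ (e.toLinearMap ∘ₗ ι)
  obtain ⟨h, t, hh⟩ :=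
    Module.FinitePresentation.exists_lift_of_isLocalizedModule S ι (e.symm.toLinearMap ∘ₗ κ)
  have hcomp : ι ∘ₗ (h ∘ₗ g) = ι ∘ₗ ((t * s) • LinearMap.id) := by
    ext m
    have hgm : κ (g m) = s • e (ι m) := LinearMap.congr_fun hg m
    have hhm : ι (h (g m)) = t • e.symm (κ (g m)) := LinearMap.congr_fun hh (g m)
    simp [hhm, hgm, Submonoid.smul_def, mul_smul]
  obtain ⟨c, hc⟩ := Module.Finite.exists_smul_of_comp_eq_of_isLocalizedModule S ι _ _ hcomp
  refine ⟨c * (t * s), (c * (t * s)).2, n, g, c • h, ?_⟩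
  ext m
  simpa [Submonoid.smul_def, mul_smul] using LinearMap.congr_fun hc m

variable {R M : Type} [CommRing R] [AddCommGroup M] [Module R M]

theorem mem_annihilator_stHom_of_comp_eq_smul_id (N : Type) [AddCommGroup N] [Module R N] {s : R}
    {n : ℕ} {g : M →ₗ[R] (Fin n → R)} {h : (Fin n → R) →ₗ[R] M}
    (hgh : h ∘ₗ g = s • LinearMap.id) : s ∈ Module.annihilator R (StHom R M N) := by
  rw [Module.mem_annihilator]
  intro y
  obtain ⟨f, rfl⟩ := Submodule.Quotient.mk_surjective _ y
  rw [← Submodule.Quotient.mk_smul, Submodule.Quotient.mk_eq_zero]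
  refine Submodule.subset_span ⟨n, g, f ∘ₗ h, ?_⟩
  rw [LinearMap.comp_assoc, hgh, LinearMap.comp_smul, LinearMap.comp_id]

theorem not_annihilator_stHom_le_of_free_localizedModule [Module.FinitePresentation R M] (N : Type)
    [AddCommGroup N] [Module R N] (p : Ideal R) [p.IsPrime]
    [Module.Free (Localization.AtPrime p) (LocalizedModule p.primeCompl M)] :
    ¬ Module.annihilator R (StHom R M N) ≤ p := by
  obtain ⟨s, hs, n, g, h, hgh⟩ :=
    exists_comp_eq_smul_id_of_free_localizedModule (M := M) p.primeCompl
  exact fun hle ↦ hs (hle (mem_annihilator_stHom_of_comp_eq_smul_id N hgh))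

end StableHom

theorem isFiniteLength_of_forall_annihilator_le_isMaximal {R M : Type*} [CommRing R]
    [IsNoetherianRing R] [AddCommGroup M] [Module R M] [Module.Finite R M]
    (h : ∀ p : Ideal R, p.IsPrime → Module.annihilator R M ≤ p → p.IsMaximal) :
    IsFiniteLength R M := by
  have hart : IsArtinianRing (R ⧸ Module.annihilator R M) := by
    rw [isArtinianRing_iff_krullDimLE_zero,
      Ideal.krullDimLE_zero_quotient_iff_forall_minimalPrimes_isMaximal]
    exact fun p hp ↦ h p hp.1.1 hp.1.2
  let : Module (R ⧸ Module.annihilator R M) M := Module.quotientAnnihilator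
  have : IsScalarTower R (R ⧸ Module.annihilator R M) M :=
    (Module.isTorsionBySet_annihilator R M).isScalarTower
  have : Module.Finite (R ⧸ Module.annihilator R M) M := .of_restrictScalars_finite R _ M
  have : IsArtinian R M := isArtinian_of_surjective_algebraMap (Ideal.Quotient.mk_surjective
    (I := Module.annihilator R M))
  exact isFiniteLength_iff_isNoetherian_isArtinian.mpr ⟨inferInstance, this⟩

theorem isFiniteLength_stHom_general (R : Type) [CommRing R] [IsNoetherianRing R] [IsLocalRing R]
    (hsing : IsolatedSingularity R) (M N : Type) [AddCommGroup M] [Module R M] [AddCommGroup N]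
    [Module R N] [Module.Finite R N] (hM : IsMCM R M) : IsFiniteLength R (StHom R M N) := by
  have := hM.1
  have := Module.finitePresentation_of_finite R M
  refine isFiniteLength_of_forall_annihilator_le_isMaximal fun p hp hle ↦ ?_
  suffices hpm : p = maximalIdeal R from hpm ▸ maximalIdeal.isMaximal R
  by_contra hpm
  have := hsing.free_localizedModule hM ⟨p, hp⟩ hpm
  exact not_annihilator_stHom_le_of_free_localizedModule N p hle

/-- Let `(R, m, k)` be a Cohen-Macaulay local ring with an isolated
singularity and `M`, `N` Cohen-Macaulay `R`-modules. Then `stHom_R(M,N)` has finite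
length as an `R`-module. -/
theorem isFiniteLength_stHom
    (R : Type) [CommRing R] [IsNoetherianRing R] [IsLocalRing R]
    (hCM : IsMCM R R) (hsing : IsolatedSingularity R)
    (M N : Type) [AddCommGroup M] [Module R M] [AddCommGroup N] [Module R N]
    (hM : IsMCM R M) (hN : IsMCM R N) :
    IsFiniteLength R (StHom R M N) := by
  have := hN.1
  exact isFiniteLength_stHom_general R hsing M N hM

end Paper
end

section
/- Let R be a Noetherian local ring and let M, N be finitely generated R-modules. Then there is an isomorphism of R-modules stHom_R(M, N) ≅ Tor_1^R(Tr M, N). -/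
/-!
Common definitions: Cohen-Macaulay modules, isolated singularities, stable Hom,
syzygies, transposes, Auslander-Reiten sequences, and the Grothendieck-type groups
`G(CM(R))`, `Ex(CM(R))`, `AR(CM(R))` from the paper
"Syzygies of Cohen-Macaulay modules and Grothendieck groups".

Throughout, the maximal ideal of a local ring is realized as the Jacobson radical
`(⊥ : Ideal R).jacobson` (for a local ring these coincide), which lets the definitions
make sense without a `IsLocalRing` instance argument.
-/

namespace Paper

/-!
Let `F₁ → F₀ → M → 0` be exact with `F₁`, `F₀` finitely generated projective and let `T` be the
cokernel of `F₀* → F₁*`. Since `Fᵢ* ⊗ X ≅ Hom(Fᵢ, X)`, the map `F₀* ⊗ X → F₁* ⊗ X` has kernel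
`Hom(M, X)` and cokernel `T ⊗ X`. For a short exact sequence `0 → K → Q → N → 0` the snake lemma
therefore yields an exact sequence `Hom(M, Q) → Hom(M, N) → T ⊗ K → T ⊗ Q`. When `Q` is projective,
the image of the first map consists of the maps factoring through a finitely generated free module,
and the kernel of the last one is `Tor₁(T, N)`.
-/

lemma finitePresentation_of_exact {R F₁ F₀ M : Type*} [Ring R]
    [AddCommGroup F₁] [Module R F₁] [Module.Finite R F₁]
    [AddCommGroup F₀] [Module R F₀] [Module.FinitePresentation R F₀]
    [AddCommGroup M] [Module R M] {d : F₁ →ₗ[R] F₀} {p : F₀ →ₗ[R] M}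
    (hdp : Function.Exact d p) (hp : Function.Surjective p) :
    Module.FinitePresentation R M := by
  refine Module.finitePresentation_of_surjective p hp ?_
  rw [hdp.linearMap_ker_eq]
  exact Submodule.FG.of_finite

lemma stSub_eq_range_compRight {R M N : Type} {Q : Type*} [CommRing R]
    [AddCommGroup M] [Module R M] [Module.FinitePresentation R M]
    [AddCommGroup Q] [Module R Q] [Module.Projective R Q]
    [AddCommGroup N] [Module R N] {π : Q →ₗ[R] N} (hπ : Function.Surjective π) :
    stSub R M N = LinearMap.range (π.compRight R : (M →ₗ[R] Q) →ₗ[R] M →ₗ[R] N) := by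
  apply le_antisymm
  · refine Submodule.span_le.2 ?_
    rintro _ ⟨n, g, h, rfl⟩
    obtain ⟨l, rfl⟩ := Module.projective_lifting_property π h hπ
    exact ⟨l ∘ₗ g, rfl⟩
  · rintro _ ⟨φ, rfl⟩
    obtain ⟨n, g, h, rfl⟩ := Module.Flat.exists_factorization_of_finitePresentation φ
    let e := Finsupp.linearEquivFunOnFinite R R (Fin n)
    refine Submodule.subset_span ⟨n, e.toLinearMap ∘ₗ g, π ∘ₗ h ∘ₗ e.symm.toLinearMap, ?_⟩
    ext x
    simp

lemma lTensor_comp_rTensor_comm {R A B X Y : Type*} [CommSemiring R]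
    [AddCommMonoid A] [Module R A] [AddCommMonoid B] [Module R B]
    [AddCommMonoid X] [Module R X] [AddCommMonoid Y] [Module R Y]
    (u : A →ₗ[R] B) (v : X →ₗ[R] Y) :
    v.lTensor B ∘ₗ u.rTensor X = u.rTensor Y ∘ₗ v.lTensor A := by
  rw [LinearMap.lTensor_comp_rTensor, LinearMap.rTensor_comp_lTensor]

lemma exact_rTensor_rTensor_mkQ_range {R A B : Type*} [CommRing R]
    [AddCommGroup A] [Module R A] [AddCommGroup B] [Module R B] (u : A →ₗ[R] B)
    (X : Type*) [AddCommGroup X] [Module R X] :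
    Function.Exact (u.rTensor X) ((LinearMap.range u).mkQ.rTensor X) :=
  rTensor_exact X (LinearMap.exact_map_mkQ_range u) (Submodule.mkQ_surjective _)

section Presentation

open TensorProduct

variable {R : Type*} [CommRing R] {F₁ F₀ M : Type*} [AddCommGroup F₁] [Module R F₁]
  [AddCommGroup F₀] [Module R F₀] [Module.Finite R F₀] [Module.Projective R F₀]
  [AddCommGroup M] [Module R M] {d : F₁ →ₗ[R] F₀} {p : F₀ →ₗ[R] M}

/-- The map `Hom(M, N) → F₀* ⊗ N` obtained by precomposing with `p : F₀ → M` and inverting the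
evaluation isomorphism `F₀* ⊗ N ≅ Hom(F₀, N)`. If `p` is the cokernel of `d : F₁ → F₀`, it exhibits
`Hom(M, N)` as the kernel of `d* ⊗ N`. -/
noncomputable def homToDualTensor (p : F₀ →ₗ[R] M) (N : Type*) [AddCommGroup N] [Module R N] :
    (M →ₗ[R] N) →ₗ[R] Module.Dual R F₀ ⊗[R] N :=
  (dualTensorHomEquiv R F₀ N).symm.toLinearMap ∘ₗ p.lcomp R N

variable {N N' : Type*} [AddCommGroup N] [Module R N] [AddCommGroup N'] [Module R N']

lemma dualTensorHom_homToDualTensor (p : F₀ →ₗ[R] M) (φ : M →ₗ[R] N) :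
    dualTensorHom R F₀ N (homToDualTensor p N φ) = φ ∘ₗ p :=
  (dualTensorHomEquiv R F₀ N).apply_symm_apply (φ ∘ₗ p)

lemma homToDualTensor_injective (hp : Function.Surjective p) :
    Function.Injective (homToDualTensor p N) :=
  (dualTensorHomEquiv R F₀ N).symm.injective.comp (LinearMap.lcomp_injective_of_surjective p hp)

lemma lTensor_comp_homToDualTensor (p : F₀ →ₗ[R] M) (g : N →ₗ[R] N') :
    g.lTensor (Module.Dual R F₀) ∘ₗ homToDualTensor p N =
      homToDualTensor p N' ∘ₗ g.compRight R := by
  ext φ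
  apply (dualTensorHomEquiv R F₀ N').injective
  have natural := LinearMap.congr_fun (dualTensorHom_comp_lTensor (M := F₀) g)
    (homToDualTensor p N φ)
  simpa [dualTensorHom_homToDualTensor, LinearMap.comp_assoc] using natural

lemma exact_homToDualTensor_rTensor_dualMap [Module.Finite R F₁] [Module.Projective R F₁]
    (hdp : Function.Exact d p) (hp : Function.Surjective p) :
    Function.Exact (homToDualTensor p N) (d.dualMap.rTensor N) := by
  refine (Function.Exact.iff_of_ladder_linearEquiv (e₁ := .refl R _)
    (e₂ := dualTensorHomEquiv R F₀ N) (e₃ := dualTensorHomEquiv R F₁ N) ?_ ?_).1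
    (LinearMap.exact_lcomp_of_exact_of_surjective N hdp hp)
  · ext φ : 1
    exact (dualTensorHom_homToDualTensor p φ).symm
  · exact (dualTensorHom_comp_rTensor_dualMap d).symm

lemma exists_exact_compRight_exact_lTensor_coker_dualMap
    [Module.Finite R F₁] [Module.Projective R F₁]
    (hdp : Function.Exact d p) (hp : Function.Surjective p)
    {K Q : Type*} [AddCommGroup K] [Module R K] [AddCommGroup Q] [Module R Q]
    {f : K →ₗ[R] Q} {g : Q →ₗ[R] N}
    (hf : Function.Injective f) (hfg : Function.Exact f g) (hg : Function.Surjective g) :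
    ∃ δ : (M →ₗ[R] N) →ₗ[R] (Module.Dual R F₁ ⧸ LinearMap.range d.dualMap) ⊗[R] K,
      Function.Exact (g.compRight R : (M →ₗ[R] Q) →ₗ[R] M →ₗ[R] N) δ ∧
      Function.Exact δ (f.lTensor (Module.Dual R F₁ ⧸ LinearMap.range d.dualMap)) := by
  have hf₁ : Function.Injective (f.lTensor (Module.Dual R F₁)) :=
    Module.Flat.lTensor_preserves_injective_linearMap f hf
  have hg₀ : Function.Surjective (g.lTensor (Module.Dual R F₀)) :=
    LinearMap.lTensor_surjective _ hg
  let δ := SnakeLemma.δ'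
    (M₁ := Module.Dual R F₀ ⊗[R] K) (M₂ := Module.Dual R F₀ ⊗[R] Q) (M₃ := Module.Dual R F₀ ⊗[R] N)
    (N₁ := Module.Dual R F₁ ⊗[R] K) (N₂ := Module.Dual R F₁ ⊗[R] Q) (N₃ := Module.Dual R F₁ ⊗[R] N)
    (d.dualMap.rTensor K) (d.dualMap.rTensor Q) (d.dualMap.rTensor N)
    (f.lTensor _) (g.lTensor _) (lTensor_exact _ hfg hg)
    (f.lTensor _) (g.lTensor _) (lTensor_exact _ hfg hg)
    (lTensor_comp_rTensor_comm _ f) (lTensor_comp_rTensor_comm _ g)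
    (homToDualTensor p N) (exact_homToDualTensor_rTensor_dualMap hdp hp)
    ((LinearMap.range d.dualMap).mkQ.rTensor K) (exact_rTensor_rTensor_mkQ_range d.dualMap K)
    hg₀ hf₁
  refine ⟨δ, ?_, ?_⟩
  · exact SnakeLemma.exact_δ'_right _ _ _ _ _ _ _ _ _ _ _
      _ (exact_homToDualTensor_rTensor_dualMap hdp hp) _ _ _ _ hg₀ hf₁
      _ (lTensor_comp_homToDualTensor p g) (homToDualTensor_injective hp)
  · exact SnakeLemma.exact_δ'_left _ _ _ _ _ _ _ _ _ _ _ _ _ _ _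
      _ (exact_rTensor_rTensor_mkQ_range d.dualMap Q) hg₀ hf₁
      _ (lTensor_comp_rTensor_comm _ f)
      (LinearMap.rTensor_surjective _ (Submodule.mkQ_surjective _))

end Presentation

section LeftDerived

open CategoryTheory Limits

universe u

variable {C D : Type*} [Category* C] [Abelian C] [Category* D] [Abelian D]

/-- If `e` is the cokernel of `f` and `g` factors as `e ≫ ι`, the homology of `f`, `g` is the kernel
of `ι`. -/
noncomputable def homologyIsoKernel {X₁ X₂ X₃ Q : C} {f : X₁ ⟶ X₂} {g : X₂ ⟶ X₃}
    {zero : f ≫ g = 0} {e : X₂ ⟶ Q} [Epi e] {w : f ≫ e = 0} (he : (ShortComplex.mk f e w).Exact)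
    {ι : Q ⟶ X₃} (hι : e ≫ ι = g) :
    (ShortComplex.mk f g zero).homology ≅ kernel ι :=
  have : Epi (ShortComplex.mk f e w).g := ‹_›
  have desc_eq : he.gIsCokernel.desc (CokernelCofork.ofπ g zero) = ι :=
    (cancel_epi e).1 ((Cofork.IsColimit.π_desc he.gIsCokernel).trans hι.symm)
  ShortComplex.RightHomologyData.homologyIso (S := ShortComplex.mk f g zero)
    { Q := Q
      H := kernel ι
      p := e
      ι := kernel.ι ι
      wp := w
      hp := he.gIsCokernel
      wι := by rw [desc_eq, kernel.condition]
      hι := IsLimit.ofIsoLimit (kernelIsKernel _) (Fork.ext (kernelIsoOfEq desc_eq)) }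

lemma comp_kernel_lift_eq_zero {X₁ X₂ X₃ Y : C} {f : X₁ ⟶ X₂} {g : X₂ ⟶ X₃} {π : X₃ ⟶ Y}
    (w₁ : f ≫ g = 0) (w₂ : g ≫ π = 0) : f ≫ kernel.lift π g w₂ = 0 :=
  (cancel_mono (kernel.ι π)).1 (by simp [w₁])

lemma exact_kernel_lift {X₁ X₂ X₃ Y : C} {f : X₁ ⟶ X₂} {g : X₂ ⟶ X₃} {π : X₃ ⟶ Y}
    {w₁ : f ≫ g = 0} (hfg : (ShortComplex.mk f g w₁).Exact) (w₂ : g ≫ π = 0) :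
    (ShortComplex.mk f (kernel.lift π g w₂) (comp_kernel_lift_eq_zero w₁ w₂)).Exact := by
  let φ : ShortComplex.mk f (kernel.lift π g w₂) (comp_kernel_lift_eq_zero w₁ w₂) ⟶
      ShortComplex.mk f g w₁ :=
    { τ₁ := 𝟙 _, τ₂ := 𝟙 _, τ₃ := kernel.ι π }
  exact (ShortComplex.exact_iff_of_epi_of_isIso_of_mono φ).2 hfg

/-- For `X₁ ⟶ X₂ ⟶ X₃ ⟶ Y` exact and `F` right exact, the homology at `F X₂` as the kernel of `F`
applied to the inclusion of the syzygy `kernel π`. -/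
noncomputable def mapHomologyIsoKernel (F : C ⥤ D) [F.Additive] [PreservesFiniteColimits F]
    {X₁ X₂ X₃ Y : C} {f : X₁ ⟶ X₂} {g : X₂ ⟶ X₃} {π : X₃ ⟶ Y} {w₁ : f ≫ g = 0} {w₂ : g ≫ π = 0}
    (hfg : (ShortComplex.mk f g w₁).Exact) (hgπ : (ShortComplex.mk g π w₂).Exact) :
    ((ShortComplex.mk f g w₁).map F).homology ≅ kernel (F.map (kernel.ι π)) :=
  have : Epi (kernel.lift π g w₂) := hgπ.epi_kernelLift
  homologyIsoKernel (e := F.map (kernel.lift π g w₂))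
    ((exact_kernel_lift hfg w₂).map_of_epi_of_preservesCokernel F this inferInstance)
    (by rw [← F.map_comp, kernel.lift_ι])

/-- Dimension shifting: the first left derived functor of a right exact `F` at `X`, in terms of the
first syzygy of `X` in the resolution `P`. -/
noncomputable def leftDerivedOneIsoKernel [HasProjectiveResolutions C] (F : C ⥤ D) [F.Additive]
    [PreservesFiniteColimits F] {X : C} (P : ProjectiveResolution X) :
    (F.leftDerived 1).obj X ≅ kernel (F.map (kernel.ι (P.π.f 0))) :=
  P.isoLeftDerivedObj F 1 ≪≫
    ShortComplex.homologyMapIso (HomologicalComplex.isoSc' _ 2 1 0 (by simp) (by simp)) ≪≫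
    mapHomologyIsoKernel F (P.exact_succ 0) P.exact₀

/-- `Tor₁(T, N)` as the kernel of `T ⊗ K → T ⊗ P₀`, where `K` is the first syzygy of `N` in `P`. -/
noncomputable def torOneEquivKer {R : Type u} [CommRing R] (T : ModuleCat.{u} R)
    {N : ModuleCat.{u} R} (P : ProjectiveResolution N) :
    ((Tor (ModuleCat.{u} R) 1).obj T).obj N ≃ₗ[R]
      LinearMap.ker ((kernel.ι (P.π.f 0)).hom.lTensor T) :=
  (leftDerivedOneIsoKernel ((MonoidalCategory.tensoringLeft (ModuleCat.{u} R)).obj T) P ≪≫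
    ModuleCat.kernelIsoKer _).toLinearEquiv

end LeftDerived

open CategoryTheory Limits in
theorem stHom_iso_tor_transpose_general {R F₁ F₀ M : Type} [CommRing R]
    [AddCommGroup F₁] [Module R F₁] [Module.Finite R F₁] [Module.Projective R F₁]
    [AddCommGroup F₀] [Module R F₀] [Module.Finite R F₀] [Module.Projective R F₀]
    [AddCommGroup M] [Module R M] {d : F₁ →ₗ[R] F₀} {p : F₀ →ₗ[R] M}
    (hdp : Function.Exact d p) (hp : Function.Surjective p)
    (N : Type) [AddCommGroup N] [Module R N] :
    Nonempty (StHom R M N ≃ₗ[R]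
      ((Tor (ModuleCat.{0} R) 1).obj
        (ModuleCat.of R (Module.Dual R F₁ ⧸ LinearMap.range d.dualMap))).obj
          (ModuleCat.of R N)) := by
  let P := projectiveResolution (ModuleCat.of R N)
  let π : P.complex.X 0 →ₗ[R] N := (P.π.f 0).hom
  let ι := (kernel.ι (P.π.f 0)).hom
  have hι : Function.Injective ι := (ModuleCat.mono_iff_injective _).1 inferInstance
  have hπ : Function.Surjective π := (ModuleCat.epi_iff_surjective _).1 inferInstance
  have hιπ : Function.Exact ι π :=
    (ShortComplex.ShortExact.moduleCat_exact_iff_function_exact _).1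
      (ShortComplex.exact_kernel (P.π.f 0))
  have := Module.finitePresentation_of_projective R F₀
  have := finitePresentation_of_exact hdp hp
  have : Module.Projective R (P.complex.X 0) :=
    (IsProjective.iff_projective _).2 (P.projective 0)
  obtain ⟨δ, hπδ, hδι⟩ := exists_exact_compRight_exact_lTensor_coker_dualMap hdp hp hι hιπ hπ
  have ker_δ : stSub R M N = LinearMap.ker δ :=
    (stSub_eq_range_compRight hπ).trans hπδ.linearMap_ker_eq.symm
  exact ⟨Submodule.quotEquivOfEq _ _ ker_δ ≪≫ₗ δ.quotKerEquivRange ≪≫ₗ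
    LinearEquiv.ofEq _ _ hδι.linearMap_ker_eq.symm ≪≫ₗ (torOneEquivKer (ModuleCat.of R _) P).symm⟩

open CategoryTheory in
/-- For finitely generated modules `M`, `N` over a Noetherian local ring
there is an isomorphism `stHom_R(M, N) ≅ Tor₁^R(Tr M, N)` (`Tr M` being the Auslander
transpose given by any minimal free presentation of `M`). -/
theorem stHom_iso_tor_transpose
    (R : Type) [CommRing R] [IsNoetherianRing R] [IsLocalRing R]
    (M N : Type) [AddCommGroup M] [Module R M] [AddCommGroup N] [Module R N]
    (hM : Module.Finite R M) (hN : Module.Finite R N) (D : PresData R M) :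
    Nonempty ((StHom R M N) ≃ₗ[R]
      ((((Tor (ModuleCat.{0} R) 1).obj (ModuleCat.of R (TrOf R D))).obj
        (ModuleCat.of R N) : ModuleCat R) : Type)) := by
  exact stHom_iso_tor_transpose_general (LinearMap.exact_iff.2 D.exact.symm) D.surj N

end Paper
end

section
/- Let (R, m, k) be a Cohen–Macaulay local ring with an isolated singularity, let 0 → A → B → C → 0 be an Auslander–Reiten sequence of Cohen–Macaulay R-modules, and let U be a non-free Cohen–Macaulay R-module. Then the induced map stHom_R(U, B) → stHom_R(U, C) is surjective if and only if C is not a direct summand of U. -/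
/-!
Common definitions: Cohen-Macaulay modules, isolated singularities, stable Hom,
syzygies, transposes, Auslander-Reiten sequences, and the Grothendieck-type groups
`G(CM(R))`, `Ex(CM(R))`, `AR(CM(R))` from the paper
"Syzygies of Cohen-Macaulay modules and Grothendieck groups".

Throughout, the maximal ideal of a local ring is realized as the Jacobson radical
`(⊥ : Ideal R).jacobson` (for a local ring these coincide), which lets the definitions
make sense without a `IsLocalRing` instance argument.
-/

namespace Paper

/-!
A map factoring through a free module lifts along any epimorphism `g`, so surjectivity of
`stHom(U, g)` is the same as surjectivity of `Hom(U, g)`: every map `U → C` has to lift to `B`.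
Since `g` is right almost split, the maps that lift are exactly those that are not split
epimorphisms, and a split epimorphism `U → C` exists if and only if `C` is a summand of `U`.
-/

section StableLifting

variable {R : Type} [CommRing R] {B C U X : Type} [AddCommGroup B] [Module R B]
  [AddCommGroup C] [Module R C] [AddCommGroup U] [Module R U] [AddCommGroup X] [Module R X]

theorem stSub_le_range_compRight {g : B →ₗ[R] C} (hg : Function.Surjective g) :
    stSub R U C ≤ LinearMap.range (g.compRight R) := by
  rw [stSub, Submodule.span_le]
  rintro _ ⟨n, a, b, rfl⟩
  obtain ⟨c, rfl⟩ := Module.projective_lifting_property g b hg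
  exact ⟨c ∘ₗ a, rfl⟩

theorem stMapLeft_surjective_iff {g : B →ₗ[R] C} (hg : Function.Surjective g) :
    Function.Surjective (stMapLeft R (M := U) g) ↔ ∀ q : U →ₗ[R] C, ∃ l, g ∘ₗ l = q := by
  constructor
  · intro hsurj q
    obtain ⟨y, hy⟩ := hsurj (Submodule.Quotient.mk q)
    obtain ⟨h, rfl⟩ := Submodule.Quotient.mk_surjective _ y
    have hmem : g ∘ₗ h - q ∈ stSub R U C := (Submodule.Quotient.eq _).mp hy
    obtain ⟨l, hl : g ∘ₗ l = g ∘ₗ h - q⟩ := stSub_le_range_compRight hg hmem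
    exact ⟨h - l, by rw [LinearMap.comp_sub, hl, sub_sub_cancel]⟩
  · intro hlift y
    obtain ⟨q, rfl⟩ := Submodule.Quotient.mk_surjective _ y
    obtain ⟨l, rfl⟩ := hlift q
    exact ⟨Submodule.Quotient.mk l, rfl⟩

theorem IsSplitEpi.of_comp {g : B →ₗ[R] C} {l : X →ₗ[R] B} (h : IsSplitEpi R (g ∘ₗ l)) :
    IsSplitEpi R g :=
  let ⟨s, hs⟩ := h
  ⟨l ∘ₗ s, hs⟩

theorem IsSplitEpi.isSummandOf {q : U →ₗ[R] C} (hq : IsSplitEpi R q) : IsSummandOf R C U := by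
  obtain ⟨s, hs⟩ := hq
  let e : (LinearMap.ker q × C) ≃ₗ[R] U :=
    lequivProdOfRightSplitExact (LinearMap.ker q).injective_subtype
      (LinearMap.ker q).range_subtype hs
  exact ⟨ModuleCat.of R (LinearMap.ker q), ⟨e.symm ≪≫ₗ LinearEquiv.prodComm R _ _⟩⟩

theorem isSummandOf_iff_exists_isSplitEpi :
    IsSummandOf R C U ↔ ∃ q : U →ₗ[R] C, IsSplitEpi R q := by
  refine ⟨?_, fun ⟨_, hq⟩ => hq.isSummandOf⟩
  rintro ⟨D, ⟨e⟩⟩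
  refine ⟨LinearMap.fst R C D ∘ₗ e, e.symm ∘ₗ LinearMap.inl R C D, ?_⟩
  ext c
  simp

/-- A right almost split map of modules: it is not a split epimorphism, and every map from a
finitely generated module to its target that is not a split epimorphism factors through it.
This isolates the lifting part of the definition of an Auslander–Reiten sequence. Surjectivity is
not included: the inclusion `m → R` in a local ring satisfies the definition. -/
def IsRightAlmostSplit (g : B →ₗ[R] C) : Prop :=
  ¬ IsSplitEpi R g ∧ ∀ (X : Type) [AddCommGroup X] [Module R X] [Module.Finite R X]
    (h : X →ₗ[R] C), ¬ IsSplitEpi R h → ∃ l : X →ₗ[R] B, g ∘ₗ l = h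

theorem IsRightAlmostSplit.exists_comp_eq_iff [Module.Finite R X] {g : B →ₗ[R] C}
    (hg : IsRightAlmostSplit g) (h : X →ₗ[R] C) : (∃ l, g ∘ₗ l = h) ↔ ¬ IsSplitEpi R h :=
  ⟨fun ⟨_, hl⟩ hh => hg.1 (hl ▸ hh).of_comp, hg.2 X h⟩

theorem stHom_surjective_iff_not_summand_general [Module.Finite R U] {g : B →ₗ[R] C}
    (hsurj : Function.Surjective g) (hg : IsRightAlmostSplit g) :
    Function.Surjective (stMapLeft R (M := U) g) ↔ ¬ IsSummandOf R C U := by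
  rw [stMapLeft_surjective_iff hsurj, isSummandOf_iff_exists_isSplitEpi, not_exists]
  exact forall_congr' hg.exists_comp_eq_iff

variable {A : Type} [AddCommGroup A] [Module R A] {f : A →ₗ[R] B} {g : B →ₗ[R] C}

theorem IsARSequence.surjective (hAR : IsARSequence R f g) : Function.Surjective g :=
  hAR.2.2.2.2.1

theorem IsARSequence.isRightAlmostSplit (hAR : IsARSequence R f g) : IsRightAlmostSplit g := by
  obtain ⟨-, -, -, -, -, -, hsplit, -, -, -, -, hlift⟩ := hAR
  exact ⟨hsplit, fun X _ _ _ h => hlift (ModuleCat.of R X) h inferInstance⟩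

end StableLifting

/-- Proposition 2.7(1). Let `(R,m,k)` be a Cohen-Macaulay local ring with
an isolated singularity, `0 → A → B → C → 0` an Auslander-Reiten sequence of Cohen-Macaulay
modules and `U` a non-free Cohen-Macaulay module. Then the induced map
`stHom(U,B) → stHom(U,C)` is surjective iff `C` is not a direct summand of `U`. -/
theorem stHom_surjective_iff_not_summand
    (R : Type) [CommRing R] [IsNoetherianRing R] [IsLocalRing R]
    (hCM : IsMCM R R) (hsing : IsolatedSingularity R)
    (A B C : Type) [AddCommGroup A] [Module R A] [AddCommGroup B] [Module R B]
    [AddCommGroup C] [Module R C] (hA : IsMCM R A) (hB : IsMCM R B) (hC : IsMCM R C)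
    (f : A →ₗ[R] B) (g : B →ₗ[R] C) (hAR : IsARSequence R f g)
    (U : Type) [AddCommGroup U] [Module R U] (hU : IsMCM R U) (hUf : ¬ Module.Free R U) :
    Function.Surjective (stMapLeft R (M := U) g) ↔ ¬ IsSummandOf R C U := by
  have := hU.1
  exact stHom_surjective_iff_not_summand_general hAR.surjective hAR.isRightAlmostSplit

end Paper
end

section
/- Let k be a field and R = k[X,Y]/(X,Y)^2. Then every indecomposable non-free finitely generated R-module that is a first syzygy of a finitely generated R-module is isomorphic to R/m ≅ k, where m = (X,Y)/(X,Y)^2 is the maximal ideal of R. In particular, R is of finite ΩCM type. -/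
/-!
Common definitions: Cohen-Macaulay modules, isolated singularities, stable Hom,
syzygies, transposes, Auslander-Reiten sequences, and the Grothendieck-type groups
`G(CM(R))`, `Ex(CM(R))`, `AR(CM(R))` from the paper
"Syzygies of Cohen-Macaulay modules and Grothendieck groups".

Throughout, the maximal ideal of a local ring is realized as the Jacobson radical
`(⊥ : Ideal R).jacobson` (for a local ring these coincide), which lets the definitions
make sense without a `IsLocalRing` instance argument.
-/

namespace Paper

/-- The ring `R = k[X,Y]/(X,Y)²`. -/
noncomputable abbrev SquareZeroRing (k : Type) [Field k] : Type :=
  MvPolynomial (Fin 2) k ⧸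
    ((Ideal.span {MvPolynomial.X 0, MvPolynomial.X 1} : Ideal (MvPolynomial (Fin 2) k)) ^ 2)

/-- The maximal ideal `m = (X,Y)/(X,Y)²` of `k[X,Y]/(X,Y)²`. -/
noncomputable def SquareZeroRing.m (k : Type) [Field k] : Ideal (SquareZeroRing k) :=
  Ideal.map (Ideal.Quotient.mk _)
    (Ideal.span {MvPolynomial.X 0, MvPolynomial.X 1} : Ideal (MvPolynomial (Fin 2) k))

/-!
If `m` is a maximal ideal with `m ^ 2 = 0`, then the Jacobson radical lies in `m`, so a minimal
first syzygy lies in `m F` with `F` free and is killed by `m`. It is therefore a vector space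
over `R ⧸ m`, and an indecomposable one is a line.
-/

section Modules

variable {R : Type} [CommRing R] {U M : Type} [AddCommGroup U] [Module R U]
  [AddCommGroup M] [Module R M]

theorem IsSyzygyOf.isTorsionBySet (hU : IsSyzygyOf R U M) {I : Ideal R}
    (hI : I * (⊥ : Ideal R).jacobson = ⊥) : Module.IsTorsionBySet R U I := by
  obtain ⟨n, π, -, hker, ⟨e⟩⟩ := hU
  rintro u ⟨a, ha⟩
  have smul_mem : a • (e u : Fin n → R) ∈
      I • (⊥ : Ideal R).jacobson • (⊤ : Submodule R (Fin n → R)) :=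
    Submodule.smul_mem_smul ha (hker (e u).2)
  rw [← Submodule.mul_smul, hI, Submodule.bot_smul, Submodule.mem_bot] at smul_mem
  exact e.map_eq_zero_iff.1 ((map_smul e a u).trans (Subtype.ext smul_mem))

theorem Indecomp.isSimpleModule [IsSemisimpleModule R U] (hU : Indecomp R U) :
    IsSimpleModule R U := by
  have : Nontrivial U := not_subsingleton_iff_nontrivial.1 hU.1
  refine (isSimpleModule_iff R U).2 ⟨fun P ↦ ?_⟩
  obtain ⟨Q, hPQ⟩ := exists_isCompl P
  rcases hU.2 (.of R P) (.of R Q) ⟨(P.prodEquivOfIsCompl Q hPQ).symm⟩ with hP | hQ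
  · exact .inl (P.subsingleton_iff_eq_bot.1 hP)
  · obtain rfl := Q.subsingleton_iff_eq_bot.1 hQ
    exact .inr (eq_top_of_isCompl_bot hPQ)

end Modules

section MaximalIdeal

variable {R M : Type*} [CommRing R] [AddCommGroup M] [Module R M] {m : Ideal R} [hm : m.IsMaximal]

theorem mul_jacobson_bot_eq_bot_of_sq_eq_bot (m_sq : m ^ 2 = ⊥) :
    m * (⊥ : Ideal R).jacobson = ⊥ := by
  have jacobson_le : (⊥ : Ideal R).jacobson ≤ m := sInf_le ⟨bot_le, hm⟩
  exact le_bot_iff.1 ((Ideal.mul_mono_right jacobson_le).trans (sq m ▸ m_sq).le)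

theorem isSemisimpleModule_of_isTorsionBySet_isMaximal (hM : Module.IsTorsionBySet R M m) :
    IsSemisimpleModule R M := by
  let := Ideal.Quotient.field m
  let := hM.module
  exact hM.isSemisimpleModule_iff.1 inferInstance

theorem nonempty_linearEquiv_quotient_of_isTorsionBySet_isMaximal [IsSimpleModule R M]
    (hM : Module.IsTorsionBySet R M m) : Nonempty (M ≃ₗ[R] R ⧸ m) := by
  obtain ⟨I, hI, ⟨e⟩⟩ := isSimpleModule_iff_quot_maximal.1 ‹IsSimpleModule R M›
  have annihilator_eq : Module.annihilator R M = I :=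
    e.annihilator_eq.trans I.annihilator_quotient
  have m_le : m ≤ I := annihilator_eq ▸ (Module.isTorsionBySet_iff_subset_annihilator R M).1 hM
  obtain rfl : m = I := hm.eq_of_le hI.ne_top m_le
  exact ⟨e⟩

end MaximalIdeal

theorem IsSyzygyOf.nonempty_linearEquiv_quotient {R U M : Type} [CommRing R] [AddCommGroup U]
    [Module R U] [AddCommGroup M] [Module R M] (hUM : IsSyzygyOf R U M) (hU : Indecomp R U)
    {m : Ideal R} [m.IsMaximal] (m_sq : m ^ 2 = ⊥) : Nonempty (U ≃ₗ[R] R ⧸ m) := by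
  have torsion : Module.IsTorsionBySet R U m :=
    hUM.isTorsionBySet (mul_jacobson_bot_eq_bot_of_sq_eq_bot m_sq)
  have := isSemisimpleModule_of_isTorsionBySet_isMaximal torsion
  have := hU.isSimpleModule
  exact nonempty_linearEquiv_quotient_of_isTorsionBySet_isMaximal torsion

section IdealOfVars

open MvPolynomial

theorem idealOfVars_eq_ker_constantCoeff (σ R : Type*) [CommSemiring R] :
    idealOfVars σ R = RingHom.ker (constantCoeff (R := R) (σ := σ)) := by
  ext p
  rw [← pow_one (idealOfVars σ R), mem_pow_idealOfVars_iff']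
  simp [constantCoeff_eq, Finsupp.degree_eq_zero_iff]

theorem isMaximal_idealOfVars (σ K : Type*) [Field K] : (idealOfVars σ K).IsMaximal := by
  rw [idealOfVars_eq_ker_constantCoeff]
  exact RingHom.ker_isMaximal_of_surjective _ fun c ↦ ⟨C c, constantCoeff_C σ c⟩

theorem span_pair_X_eq_idealOfVars (R : Type*) [CommSemiring R] :
    Ideal.span {X 0, X 1} = idealOfVars (Fin 2) R := by
  congr 1
  ext p
  simp [Fin.exists_fin_two, eq_comm]

end IdealOfVars

section QuotientPow

variable {A : Type*} [CommRing A] (I : Ideal A)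

theorem isMaximal_map_mk_pow [I.IsMaximal] {n : ℕ} (hn : n ≠ 0) :
    (I.map (Ideal.Quotient.mk (I ^ n))).IsMaximal := by
  refine .map_of_surjective_of_ker_le Ideal.Quotient.mk_surjective ?_
  rw [Ideal.mk_ker]
  exact Ideal.pow_le_self hn

theorem map_mk_pow_pow_eq_bot (n : ℕ) : I.map (Ideal.Quotient.mk (I ^ n)) ^ n = ⊥ := by
  rw [← Ideal.map_pow, Ideal.map_quotient_self]

end QuotientPow

namespace SquareZeroRing

variable (k : Type) [Field k]

instance isMaximal_m : (m k).IsMaximal := by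
  have : (Ideal.span {MvPolynomial.X 0, MvPolynomial.X 1} :
      Ideal (MvPolynomial (Fin 2) k)).IsMaximal :=
    span_pair_X_eq_idealOfVars k ▸ isMaximal_idealOfVars (Fin 2) k
  exact isMaximal_map_mk_pow _ two_ne_zero

theorem m_sq : m k ^ 2 = ⊥ :=
  map_mk_pow_pow_eq_bot _ 2

end SquareZeroRing

theorem squareZeroRing_syzygies_and_finiteOmegaCMType_general (R : Type) [CommRing R]
    (m : Ideal R) [m.IsMaximal] (m_sq : m ^ 2 = ⊥) :
    (∀ U : ModuleCat.{0} R, Indecomp R U →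
      (∃ M : ModuleCat.{0} R, IsSyzygyOf R U M) → Nonempty (U ≃ₗ[R] R ⧸ m)) ∧
    FiniteOmegaCMType R := by
  refine ⟨fun U hU ⟨M, hUM⟩ ↦ hUM.nonempty_linearEquiv_quotient hU m_sq, [.of R (R ⧸ m)], ?_⟩
  rintro U - hU ⟨M, -, hUM⟩
  exact ⟨_, List.mem_singleton_self _, hUM.nonempty_linearEquiv_quotient hU m_sq⟩

/-- Example. Let `k` be a field and `R = k[X,Y]/(X,Y)²`. Every
indecomposable non-free finitely generated `R`-module which is a first syzygy of a finitely
generated `R`-module is isomorphic to `R/m (≅ k)`; in particular `R` is of finite ΩCM type. -/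
theorem squareZeroRing_syzygies_and_finiteOmegaCMType (k : Type) [Field k] :
    (∀ U : ModuleCat.{0} (SquareZeroRing k),
      Module.Finite (SquareZeroRing k) U → Indecomp (SquareZeroRing k) (U : Type) →
      ¬ Module.Free (SquareZeroRing k) U →
      (∃ M : ModuleCat.{0} (SquareZeroRing k), Module.Finite (SquareZeroRing k) M ∧
        IsSyzygyOf (SquareZeroRing k) (U : Type) (M : Type)) →
      Nonempty ((U : Type) ≃ₗ[SquareZeroRing k] (SquareZeroRing k ⧸ SquareZeroRing.m k))) ∧
    FiniteOmegaCMType (SquareZeroRing k) := by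
  obtain ⟨equiv, finite⟩ :=
    squareZeroRing_syzygies_and_finiteOmegaCMType_general _ _ (SquareZeroRing.m_sq k)
  exact ⟨fun U _ hU _ ⟨M, _, hUM⟩ ↦ equiv U hU ⟨M, hUM⟩, finite⟩

end Paper
end
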